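/- Let Z : LC(ℝ) → ℝ be a simple, τ-upper semicontinuous, translation invariant and dually epi-translation invariant valuation that vanishes on indicator functions of closed intervals, and let u ∈ LC(ℝ) with dom u = [-m,m]. Let x₀ be a point in the interior of dom u at which u is twice differentiable with u''(x₀) = 0. Then for every ρ > 0 and δ > 0 there exist a support triangle T = T(x,y) of u, a convex body S_T ⊂ ℝ², and a function v_T ∈ PLQ(ℝ) such that: (i) (x₀, u(x₀)) ∈ T and 0 < y − x < δ; (ii) S_T ⊂ T and S_T is a support triangle of v_T; (iii) Z(u + I_{[x,y]}) ≤ Z(v_T) + (ρ/2)(y − x). -/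

import Mathlib

open MeasureTheory Filter Topology Pointwise Asymptotics

noncomputable section

variable {E : Type*} [NormedAddCommGroup E] [NormedSpace ℝ E]

/-- The effective domain of an extended-real-valued function. -/
def edom (u : E → EReal) : Set E := {x | u x < ⊤}

/-- `u` has Lipschitz constant `L` on the interior of its domain. -/
def LipBound (u : E → EReal) (L : ℝ) : Prop :=
  ∀ x ∈ interior (edom u), ∀ y ∈ interior (edom u),
    |(u x).toReal - (u y).toReal| ≤ L * ‖x - y‖

/-- Membership in `LC`: proper, lower semicontinuous, convex, compact domain,
Lipschitz on the interior of the domain. -/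
def IsLC (u : E → EReal) : Prop :=
  (∀ x y : E, ∀ t : ℝ, 0 < t → t < 1 →
      u (t • x + (1 - t) • y) ≤ (t : EReal) * u x + ((1 - t : ℝ) : EReal) * u y) ∧
  LowerSemicontinuous u ∧
  (∀ x, u x ≠ ⊥) ∧
  (∃ x, u x ≠ ⊤) ∧
  IsCompact (edom u) ∧
  (∃ L : ℝ, 0 < L ∧ LipBound u L)

/-- τ-convergence: epi-convergence together with uniformly bounded Lipschitz constants. -/
def TauConv (uk : ℕ → E → EReal) (u : E → EReal) : Prop :=
  (∀ k, IsLC (uk k)) ∧ IsLC u ∧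
  (∀ (x : E) (xk : ℕ → E), Tendsto xk atTop (𝓝 x) →
      u x ≤ liminf (fun k => uk k (xk k)) atTop) ∧
  (∀ x : E, ∃ xk : ℕ → E, Tendsto xk atTop (𝓝 x) ∧
      Tendsto (fun k => uk k (xk k)) atTop (𝓝 (u x))) ∧
  (∃ M : ℝ, 0 < M ∧ ∀ k, LipBound (uk k) M)

/-- Valuation property on `LC`. -/
def IsVal (Z : (E → EReal) → ℝ) : Prop :=
  ∀ u v : E → EReal, IsLC u → IsLC v → IsLC (fun x => min (u x) (v x)) →
    Z (fun x => min (u x) (v x)) + Z (fun x => max (u x) (v x)) = Z u + Z v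

/-- τ-upper semicontinuity. -/
def TauUSC (Z : (E → EReal) → ℝ) : Prop :=
  ∀ (uk : ℕ → E → EReal) (u : E → EReal), TauConv uk u →
    limsup (fun k => Z (uk k)) atTop ≤ Z u

/-- τ-continuity. -/
def TauCont (Z : (E → EReal) → ℝ) : Prop :=
  ∀ (uk : ℕ → E → EReal) (u : E → EReal), TauConv uk u →
    Tendsto (fun k => Z (uk k)) atTop (𝓝 (Z u))

/-- Translation invariance. -/
def TransInv (Z : (E → EReal) → ℝ) : Prop :=
  ∀ u : E → EReal, IsLC u → ∀ y : E, Z (fun x => u (x - y)) = Z u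

/-- Dual epi-translation invariance. -/
def DualTransInv (Z : (E → EReal) → ℝ) : Prop :=
  ∀ u : E → EReal, IsLC u → ∀ (l : E →ₗ[ℝ] ℝ) (c : ℝ),
    Z (fun x => u x + ((l x + c : ℝ) : EReal)) = Z u

/-- SL_n invariance. -/
def SLInv (Z : (E → EReal) → ℝ) : Prop :=
  ∀ u : E → EReal, IsLC u → ∀ φ : E →ₗ[ℝ] E, LinearMap.det φ = 1 →
    Z (fun x => u (φ x)) = Z u

/-- The class `Conc`. -/
def IsConc (ζ : ℝ → ℝ) : Prop :=
  (∀ t ∈ Set.Ici (0 : ℝ), 0 ≤ ζ t) ∧ ConcaveOn ℝ (Set.Ici 0) ζ ∧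
  Tendsto ζ (𝓝[>] 0) (𝓝 0) ∧
  Tendsto (fun t => ζ t / t) atTop (𝓝 0)

open Classical in
/-- `(∞-valued) indicator function` of a set. -/
noncomputable def eIndicator (K : Set E) : E → EReal := fun x =>
  if x ∈ K then (0 : EReal) else ⊤

/-- Real part of an extended-real-valued function. -/
def toRealFn (u : E → EReal) : E → ℝ := fun x => (u x).toReal

open Classical in
/-- Second derivative of `u`, set to `0` where `u` is not twice differentiable. -/
noncomputable def secondDeriv (u : ℝ → EReal) : ℝ → ℝ := fun x =>
  if DifferentiableAt ℝ (toRealFn u) x ∧ DifferentiableAt ℝ (deriv (toRealFn u)) x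
  then deriv (deriv (toRealFn u)) x
  else 0

/-- `T` is a support triangle of the convex function `u` with endpoints `(x, u x)` and
`(y, u y)`: the closed triangle bounded by a support line to `u` at `x`, a support line to `u`
at `y`, and the chord joining `(x, u x)` and `(y, u y)`. -/
def IsSupportTriangle (u : ℝ → EReal) (x y : ℝ) (T : Set (ℝ × ℝ)) : Prop :=
  x < y ∧ x ∈ edom u ∧ y ∈ edom u ∧
  ∃ s₁ s₂ c₁ c₂ : ℝ,
    (∀ t ∈ edom u, (u x).toReal + s₁ * (t - x) ≤ (u t).toReal) ∧
    (∀ t ∈ edom u, (u y).toReal + s₂ * (t - y) ≤ (u t).toReal) ∧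
    c₂ = (u x).toReal + s₁ * (c₁ - x) ∧
    c₂ = (u y).toReal + s₂ * (c₁ - y) ∧
    T = convexHull ℝ {((x, (u x).toReal) : ℝ × ℝ), (y, (u y).toReal), (c₁, c₂)}

/-- Membership in `PLQ(ℝ)`: the domain is a finite union of closed intervals on each of which
`u` is a quadratic or affine function. -/
def IsPLQ (u : ℝ → EReal) : Prop :=
  IsLC u ∧
  ∃ (l : ℕ) (a b : Fin (l + 1) → ℝ),
    (∀ i, a i ≤ b i) ∧
    edom u = ⋃ i, Set.Icc (a i) (b i) ∧
    ∀ i, ∃ p q r : ℝ, ∀ x ∈ Set.Icc (a i) (b i),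
      (u x).toReal = p * x ^ 2 + q * x + r


/-- Restriction of a real function to `[a,b]`, extended by `+∞`. -/
def resF (f : ℝ → ℝ) (a b : ℝ) : ℝ → EReal := fun t => (f t : EReal) + eIndicator (Set.Icc a b) t

lemma resF_mem {f : ℝ → ℝ} {a b t : ℝ} (h : t ∈ Set.Icc a b) : resF f a b t = (f t : EReal) := by
  unfold resF eIndicator; rw [if_pos h]; simp

lemma resF_notMem {f : ℝ → ℝ} {a b t : ℝ} (h : t ∉ Set.Icc a b) : resF f a b t = ⊤ := by
  unfold resF eIndicator; rw [if_neg h]; simp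

lemma le_resF (f : ℝ → ℝ) (a b t : ℝ) : (f t : EReal) ≤ resF f a b t := by
  by_cases h : t ∈ Set.Icc a b
  · rw [resF_mem h]
  · rw [resF_notMem h]; exact le_top

lemma edom_resF (f : ℝ → ℝ) (a b : ℝ) : edom (resF f a b) = Set.Icc a b := by
  ext t
  by_cases h : t ∈ Set.Icc a b
  · simp only [edom, Set.mem_ofPred_eq, resF_mem h, h, iff_true]; exact EReal.coe_lt_top _
  · simp only [edom, Set.mem_ofPred_eq, resF_notMem h, h, iff_false]; simp

lemma resF_congr {f g : ℝ → ℝ} {a b : ℝ} (h : ∀ t ∈ Set.Icc a b, f t = g t) :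
    resF f a b = resF g a b := by
  funext t
  by_cases ht : t ∈ Set.Icc a b
  · rw [resF_mem ht, resF_mem ht, h t ht]
  · rw [resF_notMem ht, resF_notMem ht]

/-- Convex and `K`-Lipschitz on the whole line. -/
def GoodF (f : ℝ → ℝ) (K : ℝ) : Prop :=
  ConvexOn ℝ Set.univ f ∧ ∀ x y, |f x - f y| ≤ K * |x - y|

lemma GoodF.nonneg {f : ℝ → ℝ} {K : ℝ} (h : GoodF f K) : 0 ≤ K := by
  have := h.2 1 0
  simp only [sub_zero, abs_one, mul_one] at this
  exact (abs_nonneg _).trans this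

lemma GoodF.continuous {f : ℝ → ℝ} {K : ℝ} (h : GoodF f K) : Continuous f := by
  have : LipschitzWith K.toNNReal f := LipschitzWith.of_dist_le' (fun x y => by
    simpa [Real.dist_eq] using h.2 x y)
  exact this.continuous

lemma GoodF.mono {f : ℝ → ℝ} {K L : ℝ} (h : GoodF f K) (hKL : K ≤ L) : GoodF f L :=
  ⟨h.1, fun x y => (h.2 x y).trans (mul_le_mul_of_nonneg_right hKL (abs_nonneg _))⟩

lemma GoodF.add {f g : ℝ → ℝ} {K L : ℝ} (hf : GoodF f K) (hg : GoodF g L) :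
    GoodF (fun t => f t + g t) (K + L) := by
  refine ⟨hf.1.add hg.1, fun x y => ?_⟩
  have h1 := hf.2 x y
  have h2 := hg.2 x y
  have : f x + g x - (f y + g y) = (f x - f y) + (g x - g y) := by ring
  simp only [this]
  refine (abs_add_le _ _).trans ?_
  linarith

lemma GoodF.shift {f : ℝ → ℝ} {K : ℝ} (hf : GoodF f K) (c : ℝ) :
    GoodF (fun t => f (t - c)) K := by
  refine ⟨⟨convex_univ, fun x _ y _ a b ha hb hab => ?_⟩, fun x y => ?_⟩
  · have := hf.1.2 (Set.mem_univ (x - c)) (Set.mem_univ (y - c)) ha hb hab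
    have e : a • x + b • y - c = a • (x - c) + b • (y - c) := by
      simp only [smul_eq_mul]; linear_combination (-c) * hab.symm
    simp only [e]; exact this
  · have := hf.2 (x - c) (y - c)
    simpa using this

lemma goodF_affine (p q : ℝ) : GoodF (fun t => p * t + q) |p| := by
  refine ⟨⟨convex_univ, fun x _ y _ a b ha hb hab => ?_⟩, fun x y => ?_⟩
  · simp only [smul_eq_mul]; apply le_of_eq; linear_combination q * (-hab)
  · have : p * x + q - (p * y + q) = p * (x - y) := by ring
    simp only [this, abs_mul]; exact le_rfl

lemma lipBound_resF {f : ℝ → ℝ} {K : ℝ} (hf : GoodF f K) (a b : ℝ) : LipBound (resF f a b) K := by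
  intro x hx y hy
  have hx' := interior_subset hx
  have hy' := interior_subset hy
  rw [edom_resF] at hx' hy'
  rw [resF_mem hx', resF_mem hy', EReal.toReal_coe, EReal.toReal_coe, Real.norm_eq_abs]
  exact hf.2 x y

lemma isLC_resF {f : ℝ → ℝ} {K : ℝ} (hf : GoodF f K) {a b : ℝ} (hab : a ≤ b) :
    IsLC (resF f a b) := by
  have hbot : ∀ x, resF f a b x ≠ ⊥ := fun x h => by
    have := le_resF f a b x
    rw [h] at this
    exact EReal.coe_ne_bot _ (le_bot_iff.mp this)
  refine ⟨?_, ?_, hbot, ⟨a, ?_⟩, ?_, |K| + 1, by positivity, ?_⟩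
  · intro x y t ht0 ht1
    have ht1' : 0 < 1 - t := by linarith
    by_cases hx : x ∈ Set.Icc a b
    · by_cases hy : y ∈ Set.Icc a b
      · have hz := (convex_Icc a b) hx hy ht0.le ht1'.le (by ring)
        rw [resF_mem hx, resF_mem hy, resF_mem hz]
        have := hf.1.2 (Set.mem_univ x) (Set.mem_univ y) ht0.le ht1'.le (by ring)
        simp only [smul_eq_mul] at this ⊢
        exact_mod_cast this
      · rw [resF_mem hx, resF_notMem hy, EReal.coe_mul_top_of_pos ht1', ← EReal.coe_mul,
          EReal.coe_add_top]
        exact le_top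
    · rw [resF_notMem hx, EReal.coe_mul_top_of_pos ht0]
      rw [EReal.top_add_of_ne_bot]
      · exact le_top
      · by_cases hy : y ∈ Set.Icc a b
        · rw [resF_mem hy, ← EReal.coe_mul]; exact EReal.coe_ne_bot _
        · rw [resF_notMem hy, EReal.coe_mul_top_of_pos ht1']; simp
  · intro x c hc
    by_cases hx : x ∈ Set.Icc a b
    · rw [resF_mem hx] at hc
      have hcont : Continuous (fun t => (f t : EReal)) :=
        continuous_coe_real_ereal.comp hf.continuous
      filter_upwards [hcont.continuousAt.eventually (lt_mem_nhds hc)] with y hy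
      exact lt_of_lt_of_le hy (le_resF f a b y)
    · rw [resF_notMem hx] at hc
      filter_upwards [isClosed_Icc.isOpen_compl.mem_nhds hx] with y hy
      rw [resF_notMem hy]; exact hc
  · rw [resF_mem ⟨le_rfl, hab⟩]; exact EReal.coe_ne_top _
  · rw [edom_resF]; exact isCompact_Icc
  · exact lipBound_resF (hf.mono (by linarith [le_abs_self K])) a b

lemma tauConv_resF {fk : ℕ → ℝ → ℝ} {f : ℝ → ℝ} {K : ℝ} (hk : ∀ k, GoodF (fk k) K)
    (hf : GoodF f K) {a b : ℝ} (hab : a ≤ b)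
    (hlim : ∀ t, Tendsto (fun k => fk k t) atTop (𝓝 (f t))) :
    TauConv (fun k => resF (fk k) a b) (resF f a b) := by
  have hlim' : ∀ (x : ℝ) (xk : ℕ → ℝ), Tendsto xk atTop (𝓝 x) →
      Tendsto (fun k => fk k (xk k)) atTop (𝓝 (f x)) := by
    intro x xk hx
    have h1 : Tendsto (fun k => fk k (xk k) - fk k x) atTop (𝓝 0) := by
      have h2 : Tendsto (fun k => K * |xk k - x|) atTop (𝓝 0) := by
        have : Tendsto (fun k => K * |xk k - x|) atTop (𝓝 (K * |x - x|)) :=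
          ((hx.sub_const x).abs).const_mul K
        simpa using this
      exact squeeze_zero_norm (fun k => by simpa using (hk k).2 (xk k) x) h2
    have := h1.add (hlim x)
    simpa using this
  refine ⟨fun k => isLC_resF (hk k) hab, isLC_resF hf hab, ?_, ?_, |K| + 1, by positivity, ?_⟩
  · intro x xk hx
    by_cases hxm : x ∈ Set.Icc a b
    · rw [resF_mem hxm]
      have h1 : Tendsto (fun k => ((fk k (xk k) : ℝ) : EReal)) atTop (𝓝 (f x : EReal)) :=
        (continuous_coe_real_ereal.tendsto _).comp (hlim' x xk hx)
      rw [← h1.liminf_eq]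
      exact liminf_le_liminf (Eventually.of_forall fun k => le_resF _ _ _ _)
    · have : ∀ᶠ k in atTop, resF (fk k) a b (xk k) = ⊤ := by
        filter_upwards [hx.eventually (isClosed_Icc.isOpen_compl.mem_nhds hxm)] with k hk
        exact resF_notMem hk
      have h2 : Tendsto (fun k => resF (fk k) a b (xk k)) atTop (𝓝 ⊤) :=
        tendsto_const_nhds.congr' (this.mono fun k hk => hk.symm)
      rw [h2.liminf_eq]; exact le_top
  · intro x
    refine ⟨fun _ => x, tendsto_const_nhds, ?_⟩
    by_cases hxm : x ∈ Set.Icc a b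
    · simp only [resF_mem hxm]
      exact (continuous_coe_real_ereal.tendsto _).comp (hlim x)
    · simp only [resF_notMem hxm]; exact tendsto_const_nhds
  · intro k
    exact lipBound_resF ((hk k).mono (by linarith [le_abs_self K])) a b

/-- Clamping to `[a,b]`. -/
def clampF (a b t : ℝ) : ℝ := max a (min b t)

/-- Extension of a convex Lipschitz function from `[a,b]` to the line. -/
def extF (f : ℝ → ℝ) (K a b : ℝ) : ℝ → ℝ := fun t => f (clampF a b t) + K * |t - clampF a b t|

lemma clampF_mem {a b : ℝ} (hab : a ≤ b) (t : ℝ) : clampF a b t ∈ Set.Icc a b :=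
  ⟨le_max_left _ _, max_le hab (min_le_left _ _)⟩

lemma clampF_eq {a b t : ℝ} (h : t ∈ Set.Icc a b) : clampF a b t = t := by
  unfold clampF; rw [min_eq_right h.2, max_eq_right h.1]

lemma extF_eq {f : ℝ → ℝ} {K a b t : ℝ} (h : t ∈ Set.Icc a b) : extF f K a b t = f t := by
  unfold extF; rw [clampF_eq h]; simp

lemma extF_left {f : ℝ → ℝ} {K a b t : ℝ} (hab : a ≤ b) (h : t ≤ a) :
    extF f K a b t = (-K) * t + (f a + K * a) := by
  have : clampF a b t = a := by
    unfold clampF; rw [min_eq_right (h.trans hab), max_eq_left h]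
  unfold extF; rw [this, abs_of_nonpos (by linarith)]; ring

lemma extF_right {f : ℝ → ℝ} {K a b t : ℝ} (hab : a ≤ b) (h : b ≤ t) :
    extF f K a b t = K * t + (f b - K * b) := by
  have : clampF a b t = b := by
    unfold clampF; rw [min_eq_left h, max_eq_right hab]
  unfold extF; rw [this, abs_of_nonneg (by linarith)]; ring

lemma extF_le {f : ℝ → ℝ} {K a b : ℝ} (hab : a ≤ b)
    (hL : ∀ x ∈ Set.Icc a b, ∀ y ∈ Set.Icc a b, |f x - f y| ≤ K * |x - y|)
    (t : ℝ) {s : ℝ} (hs : s ∈ Set.Icc a b) : extF f K a b t ≤ f s + K * |t - s| := by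
  have h1 := (le_abs_self _).trans (hL _ (clampF_mem hab t) s hs)
  have h2 : |t - s| = |t - clampF a b t| + |clampF a b t - s| := by
    obtain ⟨hs1, hs2⟩ := hs
    by_cases h : t ∈ Set.Icc a b
    · rw [clampF_eq h]; simp
    · rcases lt_or_ge t a with h' | h'
      · have : clampF a b t = a := by
          unfold clampF; rw [min_eq_right (h'.le.trans hab), max_eq_left h'.le]
        rw [this, abs_of_nonpos, abs_of_nonpos, abs_of_nonpos] <;> linarith
      · have h'' : b < t := by
          by_contra h3; exact h ⟨h', not_lt.mp h3⟩
        have : clampF a b t = b := by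
          unfold clampF; rw [min_eq_left h''.le, max_eq_right hab]
        rw [this, abs_of_nonneg, abs_of_nonneg, abs_of_nonneg] <;> linarith
  unfold extF
  rw [h2]; linarith

lemma goodF_extF {f : ℝ → ℝ} {K a b : ℝ} (hab : a ≤ b) (hK : 0 ≤ K)
    (hc : ConvexOn ℝ (Set.Icc a b) f)
    (hL : ∀ x ∈ Set.Icc a b, ∀ y ∈ Set.Icc a b, |f x - f y| ≤ K * |x - y|) :
    GoodF (extF f K a b) K := by
  refine ⟨⟨convex_univ, fun x _ y _ α β ha hb hαβ => ?_⟩, ?_⟩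
  · have hx := clampF_mem hab x
    have hy := clampF_mem hab y
    refine (extF_le hab hL _ (hc.1 hx hy ha hb hαβ)).trans ?_
    have h1 := hc.2 hx hy ha hb hαβ
    simp only [smul_eq_mul] at h1 ⊢
    have h2 : |α * x + β * y - (α * clampF a b x + β * clampF a b y)| ≤
        α * |x - clampF a b x| + β * |y - clampF a b y| := by
      have e : α * x + β * y - (α * clampF a b x + β * clampF a b y) =
        α * (x - clampF a b x) + β * (y - clampF a b y) := by ring
      rw [e]
      refine (abs_add_le _ _).trans ?_
      rw [abs_mul, abs_mul, abs_of_nonneg ha, abs_of_nonneg hb]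
    have h3 := mul_le_mul_of_nonneg_left h2 hK
    unfold extF
    linarith
  · have key : ∀ x y, extF f K a b x - extF f K a b y ≤ K * |x - y| := by
      intro x y
      have h1 := extF_le hab hL x (clampF_mem hab y)
      have h2 := mul_le_mul_of_nonneg_left (abs_sub_le x y (clampF a b y)) hK
      have h3 : extF f K a b y = f (clampF a b y) + K * |y - clampF a b y| := rfl
      linarith
    intro x y
    rw [abs_le]
    constructor
    · have := key y x
      rw [abs_sub_comm] at this; linarith
    · exact key x y

/-- The standing assumptions on `Z`. -/
structure ZHyp (Z : (ℝ → EReal) → ℝ) : Prop where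
  val : IsVal Z
  usc : TauUSC Z
  trans : TransInv Z
  dual : DualTransInv Z
  simple : ∀ u : ℝ → EReal, IsLC u → (∃ x : ℝ, edom u = {x}) → Z u = 0
  vanish : ∀ a b : ℝ, a ≤ b → Z (eIndicator (Set.Icc a b)) = 0

lemma ZHyp.add {Z : (ℝ → EReal) → ℝ} (hZ : ZHyp Z) {f : ℝ → ℝ} {K : ℝ} (hf : GoodF f K)
    {a b c : ℝ} (hab : a ≤ b) (hbc : b ≤ c) :
    Z (resF f a c) = Z (resF f a b) + Z (resF f b c) := by
  have hmin : (fun x => min (resF f a b x) (resF f b c x)) = resF f a c := by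
    funext x
    by_cases h1 : x ∈ Set.Icc a b
    · have h3 : x ∈ Set.Icc a c := ⟨h1.1, h1.2.trans hbc⟩
      rw [resF_mem h1, resF_mem h3, min_eq_left (le_resF f b c x)]
    · by_cases h2 : x ∈ Set.Icc b c
      · have h3 : x ∈ Set.Icc a c := ⟨hab.trans h2.1, h2.2⟩
        rw [resF_mem h2, resF_mem h3, min_eq_right (le_resF f a b x)]
      · have h3 : x ∉ Set.Icc a c := by
          intro h
          rcases le_total x b with h' | h'
          · exact h1 ⟨h.1, h'⟩
          · exact h2 ⟨h', h.2⟩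
        rw [resF_notMem h1, resF_notMem h2, resF_notMem h3, min_self]
  have hmax : (fun x => max (resF f a b x) (resF f b c x)) = resF f b b := by
    funext x
    by_cases h1 : x ∈ Set.Icc a b
    · by_cases h2 : x ∈ Set.Icc b c
      · have h3 : x ∈ Set.Icc b b := ⟨h2.1, h1.2⟩
        rw [resF_mem h1, resF_mem h2, resF_mem h3, max_self]
      · have h3 : x ∉ Set.Icc b b := fun h => h2 ⟨h.1, h.2.trans hbc⟩
        rw [resF_notMem h2, resF_notMem h3]; simp
    · have h3 : x ∉ Set.Icc b b := fun h => h1 ⟨hab.trans h.1, h.2⟩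
      rw [resF_notMem h1, resF_notMem h3]; simp
  have := hZ.val (resF f a b) (resF f b c) (isLC_resF hf hab) (isLC_resF hf hbc)
    (by rw [hmin]; exact isLC_resF hf (hab.trans hbc))
  rw [hmin, hmax, hZ.simple _ (isLC_resF hf le_rfl) ⟨b, by rw [edom_resF]; simp⟩] at this
  linarith

lemma ZHyp.affine_add {Z : (ℝ → EReal) → ℝ} (hZ : ZHyp Z) {f g : ℝ → ℝ} {K : ℝ} (hf : GoodF f K)
    {a b : ℝ} (hab : a ≤ b) {p q : ℝ} (hg : ∀ t ∈ Set.Icc a b, g t = f t + (p * t + q)) :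
    Z (resF g a b) = Z (resF f a b) := by
  have h1 := hZ.dual (resF f a b) (isLC_resF hf hab) (p • LinearMap.id) q
  rw [← h1]
  congr 1
  funext t
  by_cases ht : t ∈ Set.Icc a b
  · rw [resF_mem ht, resF_mem ht, hg t ht]
    simp
  · rw [resF_notMem ht, resF_notMem ht]
    simp only [EReal.top_add_coe]

lemma ZHyp.shift {Z : (ℝ → EReal) → ℝ} (hZ : ZHyp Z) {f g : ℝ → ℝ} {K : ℝ} (hf : GoodF f K)
    {a b a' b' : ℝ} (hab : a ≤ b) (c : ℝ) (ha : a' = a + c) (hb : b' = b + c)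
    (hg : ∀ t ∈ Set.Icc a' b', g t = f (t - c)) :
    Z (resF g a' b') = Z (resF f a b) := by
  rw [← hZ.trans (resF f a b) (isLC_resF hf hab) c]
  congr 1
  funext t
  by_cases ht : t ∈ Set.Icc a' b'
  · have : t - c ∈ Set.Icc a b := ⟨by linarith [ht.1], by linarith [ht.2]⟩
    rw [resF_mem ht, resF_mem this, hg t ht]
  · have : t - c ∉ Set.Icc a b := fun h => ht ⟨by linarith [h.1], by linarith [h.2]⟩
    rw [resF_notMem ht, resF_notMem this]

lemma ZHyp.affine {Z : (ℝ → EReal) → ℝ} (hZ : ZHyp Z) {g : ℝ → ℝ}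
    {a b : ℝ} (hab : a ≤ b) {p q : ℝ} (hg : ∀ t ∈ Set.Icc a b, g t = p * t + q) :
    Z (resF g a b) = 0 := by
  rw [hZ.affine_add (goodF_affine 0 0) hab (p := p) (q := q) (fun t ht => by rw [hg t ht]; ring)]
  refine Eq.trans ?_ (hZ.vanish a b hab)
  congr 1
  funext t
  simp [resF]

/-- Gluing `n` copies of a convex block. -/
lemma ZHyp.copies {Z : (ℝ → EReal) → ℝ} (hZ : ZHyp Z) {φ : ℝ → ℝ} {K h : ℝ} (hφ : GoodF φ K)
    (hh : 0 ≤ h) {p q p' q' : ℝ} (hl : ∀ t ≤ -h, φ t = p * t + q)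
    (hr : ∀ t, h ≤ t → φ t = p' * t + q') (n : ℕ) :
    ∃ G : ℝ → ℝ, GoodF G (n * K) ∧ (∃ r s, ∀ t ≤ 0, G t = r * t + s) ∧
      (∃ r s, ∀ t, 2 * h * n ≤ t → G t = r * t + s) ∧
      Z (resF G 0 (2 * h * n)) = n * Z (resF φ (-h) h) := by
  induction n with
  | zero =>
    refine ⟨fun t => 0 * t + 0, by simpa using goodF_affine 0 0, ⟨0, 0, fun t _ => rfl⟩,
      ⟨0, 0, fun t _ => rfl⟩, ?_⟩
    rw [hZ.affine (p := 0) (q := 0) (by simp) (fun t _ => rfl)]; simp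
  | succ n ih =>
    obtain ⟨G, hG, ⟨r1, s1, h1⟩, ⟨r2, s2, h2⟩, hval⟩ := ih
    set c : ℝ := 2 * h * n with hc
    have hc0 : 0 ≤ c := by positivity
    have hc1 : 2 * h * ((n + 1 : ℕ) : ℝ) = c + 2 * h := by rw [hc]; push_cast; ring
    have hgood : GoodF (fun t => G t + φ (t - (c + h))) (n * K + K) := hG.add (hφ.shift (c + h))
    refine ⟨fun t => G t + φ (t - (c + h)), ?_, ?_, ?_, ?_⟩
    · have : ((n + 1 : ℕ) : ℝ) * K = n * K + K := by push_cast; ring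
      rw [this]; exact hgood
    · refine ⟨r1 + p, s1 + q - p * (c + h), fun t ht => ?_⟩
      simp only [h1 t ht, hl (t - (c + h)) (by linarith)]; ring
    · refine ⟨r2 + p', s2 + q' - p' * (c + h), fun t ht => ?_⟩
      rw [hc1] at ht
      simp only [h2 t (by linarith), hr (t - (c + h)) (by linarith)]; ring
    · rw [hc1, hZ.add hgood hc0 (by linarith : c ≤ c + 2 * h)]
      have e1 : Z (resF (fun t => G t + φ (t - (c + h))) 0 c) = Z (resF G 0 c) := by
        apply hZ.affine_add hG hc0 (p := p) (q := q - p * (c + h))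
        intro t ht
        simp only [hl (t - (c + h)) (by linarith [ht.2])]; ring
      have e2 : Z (resF (fun t => G t + φ (t - (c + h))) c (c + 2 * h)) = Z (resF φ (-h) h) := by
        rw [← hZ.shift hφ (by linarith : -h ≤ h) (c + h) (a' := c) (b' := c + 2 * h)
          (by ring) (by ring) (fun t _ => rfl)]
        apply hZ.affine_add (hφ.shift (c + h)) (by linarith) (p := r2) (q := s2)
        intro t ht
        simp only [h2 t ht.1]; ring
      rw [e1, e2, hval]; push_cast; ring

lemma limsup_aux {a : ℕ → ℝ} {c : ℝ} (h : ∀ k, c ≤ a k) :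
    c ≤ limsup a atTop ∨ (limsup a atTop = 0 ∧ ¬ ∃ C, ∀ k, a k ≤ C) := by
  rw [limsup_eq]
  by_cases hne : {x : ℝ | ∀ᶠ n in atTop, a n ≤ x}.Nonempty
  · left
    refine le_csInf hne fun x hx => ?_
    obtain ⟨k, hk⟩ := Eventually.exists (f := atTop) hx
    exact (h k).trans hk
  · right
    refine ⟨?_, fun ⟨C, hC⟩ => hne ⟨C, Eventually.of_forall hC⟩⟩
    rw [Set.not_nonempty_iff_eq_empty.mp hne, Real.sInf_empty]

/-- Contradiction with upper semicontinuity. -/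
lemma ZHyp.contra {Z : (ℝ → EReal) → ℝ} (hZ : ZHyp Z) {D : ℝ} (hD : 0 ≤ D) {P : ℝ → Prop}
    (hG : ∀ η > 0, ∃ G : ℝ → ℝ, GoodF G η ∧ (∃ r s, ∀ t ≤ 0, G t = r * t + s) ∧
      1 ≤ Z (resF G 0 D) ∧ P (Z (resF G 0 D)))
    {B : ℝ → ℝ} {K a b : ℝ} (hab : a ≤ b) (hB : GoodF B K)
    (hBr : ∃ r s, ∀ t, b ≤ t → B t = r * t + s)
    (hcase : Z (resF B a b) < 0 ∨ ∃ C, ∀ z, P z → z ≤ C) : False := by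
  have hη : ∀ k : ℕ, (0 : ℝ) < 1 / ((k : ℝ) + 1) := fun k => by positivity
  choose G hG1 hG2 hG3 hG4 using fun k : ℕ => hG _ (hη k)
  obtain ⟨r, s, hr⟩ := hBr
  let H : ℕ → ℝ → ℝ := fun k t => B t + (G k (t - b) + (0 * t + (- G k 0)))
  have hH : ∀ k, GoodF (H k) (K + 1) := fun k => by
    have h1 : GoodF (H k) (K + (1 / ((k : ℝ) + 1) + |0|)) :=
      hB.add (((hG1 k).shift b).add (goodF_affine 0 (- G k 0)))
    refine h1.mono ?_
    have : 1 / ((k : ℝ) + 1) ≤ 1 := by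
      rw [div_le_one (by positivity)]; linarith [Nat.cast_nonneg (α := ℝ) k]
    simp only [abs_zero]; linarith
  have hlim : ∀ t, Tendsto (fun k => H k t) atTop (𝓝 (B t)) := by
    intro t
    have h1 : Tendsto (fun k => G k (t - b) - G k 0) atTop (𝓝 0) := by
      have h2 : Tendsto (fun k : ℕ => 1 / ((k : ℝ) + 1) * |t - b|) atTop (𝓝 0) := by
        simpa using (tendsto_one_div_add_atTop_nhds_zero_nat (𝕜 := ℝ)).mul_const |t - b|
      exact squeeze_zero_norm (fun k => by simpa using (hG1 k).2 (t - b) 0) h2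
    have h3 := h1.const_add (B t)
    simp only [add_zero] at h3
    refine h3.congr fun k => ?_
    simp only [H]; ring
  have hconv := tauConv_resF hH (hB.mono (by linarith : K ≤ K + 1))
    (by linarith : a ≤ b + D) hlim
  have husc := hZ.usc _ _ hconv
  have eB : Z (resF B a (b + D)) = Z (resF B a b) := by
    rw [hZ.add hB hab (by linarith), hZ.affine (g := B) (a := b) (by linarith)
      (fun t ht => hr t ht.1), add_zero]
  have eH : ∀ k, Z (resF (H k) a (b + D)) = Z (resF B a b) + Z (resF (G k) 0 D) := by
    intro k
    rw [hZ.add (hH k) hab (by linarith)]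
    congr 1
    · obtain ⟨r', s', h'⟩ := hG2 k
      apply hZ.affine_add hB hab (p := r') (q := s' - r' * b - G k 0)
      intro t ht
      simp only [H, h' (t - b) (by linarith [ht.2])]; ring
    · rw [← hZ.shift (hG1 k) hD b (a' := b) (b' := b + D) (by ring) (by ring) (fun t _ => rfl)]
      apply hZ.affine_add ((hG1 k).shift b) (by linarith) (p := r) (q := s - G k 0)
      intro t ht
      simp only [H, hr t ht.1]; ring
  rw [eB] at husc
  simp only [eH] at husc
  rcases limsup_aux (a := fun k => Z (resF B a b) + Z (resF (G k) 0 D)) (c := Z (resF B a b) + 1)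
    (fun k => by linarith [hG3 k]) with h | ⟨h0, hnb⟩
  · linarith
  · rcases hcase with hneg | ⟨C, hC⟩
    · linarith
    · exact hnb ⟨Z (resF B a b) + C, fun k => by linarith [hC _ (hG4 k)]⟩

lemma goodF_local {g : ℝ → ℝ} {r₀ ε h : ℝ} (hconv : ConvexOn ℝ (Set.Icc (-r₀) r₀) g)
    (hh : 0 < h) (hε : 0 ≤ ε) (hhr : 3 * h ≤ r₀) (hb : ∀ t, |t| < 3 * h → |g t| ≤ ε * t ^ 2) :
    GoodF (extF g (18 * ε * h) (-h) h) (18 * ε * h) := by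
  have hK : 0 ≤ 18 * ε * h := by positivity
  have hsub : Metric.ball (0 : ℝ) (3 * h) ⊆ Set.Icc (-r₀) r₀ := by
    intro t ht
    rw [Metric.mem_ball, Real.dist_eq, sub_zero, abs_lt] at ht
    exact ⟨by linarith [ht.1], by linarith [ht.2]⟩
  have hc := hconv.subset hsub (convex_ball _ _)
  have hM : ∀ t, dist t 0 < 3 * h → |g t| ≤ ε * (3 * h) ^ 2 := by
    intro t ht
    rw [Real.dist_eq, sub_zero] at ht
    refine (hb t ht).trans (mul_le_mul_of_nonneg_left ?_ hε)
    rw [← sq_abs]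
    exact pow_le_pow_left₀ (abs_nonneg _) ht.le 2
  have hL := hc.lipschitzOnWith_of_abs_le hh hM
  have e : 2 * (ε * (3 * h) ^ 2) / h = 18 * ε * h := by field_simp; ring
  rw [e] at hL
  have hin : ∀ t ∈ Set.Icc (-h) h, t ∈ Metric.ball (0 : ℝ) (3 * h - h) := by
    intro t ht
    rw [Metric.mem_ball, Real.dist_eq, sub_zero, abs_lt]
    exact ⟨by linarith [ht.1], by linarith [ht.2]⟩
  refine goodF_extF (by linarith) hK
    (hconv.subset (Set.Icc_subset_Icc (by linarith) (by linarith)) (convex_Icc _ _)) ?_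
  intro x hx y hy
  have := hL.dist_le_mul x (hin x hx) y (hin y hy)
  rw [Real.coe_toNNReal _ hK, Real.dist_eq, Real.dist_eq] at this
  exact this

lemma ZHyp.main {Z : (ℝ → EReal) → ℝ} (hZ : ZHyp Z) {g : ℝ → ℝ} {r₀ ρ h₁ : ℝ} (hr₀ : 0 < r₀)
    (hρ : 0 < ρ) (hh₁ : 0 < h₁) (hconv : ConvexOn ℝ (Set.Icc (-r₀) r₀) g)
    (ho : g =o[𝓝 0] fun h : ℝ => h ^ 2) :
    ∃ h, 0 < h ∧ h < h₁ ∧ h < r₀ ∧ (∃ K, GoodF (extF g K (-h) h) K) ∧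
      Z (resF g (-h) h) ≤ ρ * h := by
  by_contra hcon
  push Not at hcon
  have hlit : ∀ ε > 0, ∃ r > 0, ∀ t : ℝ, |t| < r → |g t| ≤ ε * t ^ 2 := by
    intro ε hε
    have := ho.def hε
    rw [Metric.eventually_nhds_iff] at this
    obtain ⟨r, hr, h⟩ := this
    refine ⟨r, hr, fun t ht => ?_⟩
    have := h (y := t) (by simpa [Real.dist_eq] using ht)
    simpa using this
  have hext : ∀ K h, resF (extF g K (-h) h) (-h) h = resF g (-h) h := fun K h =>
    resF_congr fun t ht => extF_eq ht
  obtain ⟨r, hr, hrg⟩ := hlit 1 one_pos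
  obtain ⟨h₂, hh₂, h21, h2r0, h2r, h2one⟩ :
      ∃ h₂ : ℝ, 0 < h₂ ∧ h₂ < h₁ ∧ 3 * h₂ < r₀ ∧ 3 * h₂ < r ∧ h₂ < 1 := by
    have hpos : 0 < min (min h₁ r₀) (min r 1) :=
      lt_min (lt_min hh₁ hr₀) (lt_min hr one_pos)
    refine ⟨min (min h₁ r₀) (min r 1) / 4, by linarith, ?_, ?_, ?_, ?_⟩
    · linarith [(min_le_left (min h₁ r₀) (min r 1)).trans (min_le_left _ _)]
    · linarith [(min_le_left (min h₁ r₀) (min r 1)).trans (min_le_right _ _)]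
    · linarith [(min_le_right (min h₁ r₀) (min r 1)).trans (min_le_left _ _)]
    · linarith [(min_le_right (min h₁ r₀) (min r 1)).trans (min_le_right _ _)]
  have hD : 0 ≤ 2 / ρ + 2 := by positivity
  let P : ℝ → Prop := fun z => ∃ h, 0 < h ∧ h < h₂ ∧ z ≤ 1 + Z (resF g (-h) h)
  have hG : ∀ η > 0, ∃ G : ℝ → ℝ, GoodF G η ∧ (∃ r s, ∀ t ≤ 0, G t = r * t + s) ∧
      1 ≤ Z (resF G 0 (2 / ρ + 2)) ∧ P (Z (resF G 0 (2 / ρ + 2))) := by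
    intro η hη
    obtain ⟨ε, hε, hεη⟩ : ∃ ε > 0, 18 * ε * (1 / ρ + 1) = η :=
      ⟨η / (18 * (1 / ρ + 1)), by positivity, by field_simp⟩
    obtain ⟨r', hr', hrg'⟩ := hlit ε hε
    obtain ⟨h, hh, hh2, hhr'⟩ : ∃ h : ℝ, 0 < h ∧ h < h₂ ∧ 3 * h < r' := by
      have hpos : 0 < min h₂ r' := lt_min hh₂ hr'
      refine ⟨min h₂ r' / 4, by linarith, ?_, ?_⟩
      · linarith [min_le_left h₂ r']
      · linarith [min_le_right h₂ r']
    set K := 18 * ε * h with hKdef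
    have hK : 0 ≤ K := by positivity
    have hgood : GoodF (extF g K (-h) h) K :=
      goodF_local hconv hh hε.le (by linarith) (fun t ht => hrg' t (by linarith))
    have hF := hcon h hh (by linarith) (by linarith) ⟨K, hgood⟩
    set F := Z (resF g (-h) h) with hFdef
    have hρh : 0 < ρ * h := by positivity
    have hF0 : 0 < F := hρh.trans hF
    set n := ⌈1 / F⌉₊ with hn
    have hn1 : 1 / F ≤ n := Nat.le_ceil _
    have hn2 : (n : ℝ) < 1 / F + 1 := Nat.ceil_lt_add_one (by positivity)
    have hn3 : (n : ℝ) ≤ 1 / (ρ * h) + 1 := by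
      have : 1 / F ≤ 1 / (ρ * h) := one_div_le_one_div_of_le hρh hF.le
      linarith
    obtain ⟨G, hG1, hG2, ⟨rr, ss, hG3⟩, hG4⟩ := hZ.copies hgood hh.le
      (fun t ht => extF_left (by linarith) ht) (fun t ht => extF_right (by linarith) ht) n
    rw [hext, ← hFdef] at hG4
    have hnF1 : 1 ≤ n * F := by
      rw [div_le_iff₀ hF0] at hn1; exact hn1
    have hnF2 : n * F ≤ 1 + F := by
      have := mul_le_mul_of_nonneg_right hn2.le hF0.le
      have e : (1 / F + 1) * F = 1 + F := by field_simp
      linarith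
    have hlen : 2 * h * n ≤ 2 / ρ + 2 := by
      have := mul_le_mul_of_nonneg_left hn3 (by positivity : 0 ≤ 2 * h)
      have e : 2 * h * (1 / (ρ * h) + 1) = 2 / ρ + 2 * h := by field_simp
      linarith
    have hZG : Z (resF G 0 (2 / ρ + 2)) = n * F := by
      rw [hZ.add hG1 (by positivity : 0 ≤ 2 * h * n) hlen, hG4,
        hZ.affine hlen (fun t ht => hG3 t ht.1), add_zero]
    refine ⟨G, hG1.mono ?_, hG2, by rw [hZG]; exact hnF1, ⟨h, hh, hh2, by rw [hZG]; exact hnF2⟩⟩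
    have h1 := mul_le_mul_of_nonneg_right hn3 hK
    have e : (1 / (ρ * h) + 1) * K = 18 * ε * (1 / ρ + h) := by rw [hKdef]; field_simp
    have h2 : 18 * ε * (1 / ρ + h) ≤ 18 * ε * (1 / ρ + 1) :=
      mul_le_mul_of_nonneg_left (by linarith) (by positivity)
    linarith
  by_cases hneg : ∃ (B : ℝ → ℝ) (K a b : ℝ), a ≤ b ∧ GoodF B K ∧ Z (resF B a b) < 0
  · obtain ⟨B, K, a, b, hab, hB, hBneg⟩ := hneg
    have hB' : GoodF (extF B K a b) K :=
      goodF_extF hab hB.nonneg (hB.1.subset (Set.subset_univ _) (convex_Icc _ _))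
        (fun x _ y _ => hB.2 x y)
    refine hZ.contra hD hG hab hB' ⟨_, _, fun t ht => extF_right hab ht⟩ (Or.inl ?_)
    rw [resF_congr (g := B) fun t ht => extF_eq ht]
    exact hBneg
  · push Not at hneg
    refine hZ.contra hD hG (le_refl (0 : ℝ)) (goodF_affine 0 0) ⟨0, 0, fun t _ => rfl⟩
      (Or.inr ⟨1 + Z (resF g (-h₂) h₂), ?_⟩)
    rintro z ⟨h, hh, hh2, hz⟩
    have hgood : GoodF (extF g (18 * 1 * h₂) (-h₂) h₂) (18 * 1 * h₂) :=
      goodF_local hconv hh₂ zero_le_one (by linarith) (fun t ht => hrg t (by linarith))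
    have e1 := hZ.add hgood (by linarith : -h₂ ≤ -h) (by linarith : -h ≤ h₂)
    have e2 := hZ.add hgood (by linarith : -h ≤ h) (by linarith : h ≤ h₂)
    rw [hext] at e1
    rw [resF_congr (f := extF g (18 * 1 * h₂) (-h₂) h₂) (g := g) (a := -h) (b := h)
      (fun t ht => extF_eq ⟨by linarith [ht.1], by linarith [ht.2]⟩)] at e2
    have n1 := hneg _ _ (-h₂) (-h) (by linarith) hgood
    have n2 := hneg _ _ h h₂ (by linarith) hgood
    linarith

lemma exists_subgrad {f : ℝ → ℝ} {m x : ℝ} (hf : ConvexOn ℝ (Set.Icc (-m) m) f)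
    (hx : x ∈ Set.Ioo (-m) m) : ∃ s, ∀ t ∈ Set.Icc (-m) m, f x + s * (t - x) ≤ f t := by
  have hx' : x ∈ interior (Set.Icc (-m) m) := by rw [interior_Icc]; exact hx
  have hxs := Set.Ioo_subset_Icc_self hx
  refine ⟨derivWithin f (Set.Ioi x) x, fun t ht => ?_⟩
  rcases lt_trichotomy t x with h | h | h
  · have h1 := hf.slope_le_of_hasDerivWithinAt_Iio ht hxs h
      (hf.hasDerivWithinAt_leftDeriv_of_mem_interior hx')
    have h2 := h1.trans (hf.leftDeriv_le_rightDeriv_of_mem_interior hx')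
    rw [slope_def_field, div_le_iff₀ (by linarith)] at h2
    linarith
  · rw [h]; simp
  · have h1 := hf.le_slope_of_hasDerivWithinAt_Ioi hxs ht h
      (hf.hasDerivWithinAt_rightDeriv_of_mem_interior hx')
    rw [slope_def_field, le_div_iff₀ (by linarith)] at h1
    linarith

/-- A point above both support lines and below the chord lies in the support triangle. -/
lemma triangle_aux {x y z A B C s₁ s₂ : ℝ} (hxz : x < z) (hzy : z < y)
    (h1 : A + s₁ * (y - x) ≤ B) (h2 : B + s₂ * (x - y) ≤ A)
    (h3 : A + s₁ * (z - x) ≤ C) (h4 : B + s₂ * (z - y) ≤ C)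
    (h5 : C * (y - x) ≤ A * (y - z) + B * (z - x)) :
    ∃ c₁ c₂ : ℝ, c₂ = A + s₁ * (c₁ - x) ∧ c₂ = B + s₂ * (c₁ - y) ∧
      (z, C) ∈ convexHull ℝ {((x, A) : ℝ × ℝ), (y, B), (c₁, c₂)} := by
  have hxy : 0 < y - x := by linarith
  have comb : ∀ (c₁ c₂ α β γ : ℝ), 0 ≤ α → 0 ≤ β → 0 ≤ γ → α + β + γ = 1 →
      α * x + β * y + γ * c₁ = z → α * A + β * B + γ * c₂ = C →
      (z, C) ∈ convexHull ℝ {((x, A) : ℝ × ℝ), (y, B), (c₁, c₂)} := by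
    intro c₁ c₂ α β γ hα hβ hγ hs e1 e2
    have hsum := (convex_convexHull ℝ {((x, A) : ℝ × ℝ), (y, B), (c₁, c₂)}).sum_mem
      (t := Finset.univ) (w := ![α, β, γ])
      (z := ![((x, A) : ℝ × ℝ), (y, B), (c₁, c₂)])
      (by intro i _; fin_cases i <;> assumption)
      (by simp [Fin.sum_univ_three, hs])
      (by intro i _; apply subset_convexHull; fin_cases i <;> simp)
    simp only [Fin.sum_univ_three] at hsum
    have e : (z, C) = α • ((x, A) : ℝ × ℝ) + β • ((y, B) : ℝ × ℝ) + γ • ((c₁, c₂) : ℝ × ℝ) := by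
      ext
      · simp [← e1]
      · simp [← e2]
    rw [e]
    exact hsum
  have deg : C * (y - x) = A * (y - z) + B * (z - x) → ∀ c₁ c₂ : ℝ,
      (z, C) ∈ convexHull ℝ {((x, A) : ℝ × ℝ), (y, B), (c₁, c₂)} := by
    intro hC c₁ c₂
    refine comb c₁ c₂ ((y - z) / (y - x)) ((z - x) / (y - x)) 0 (div_nonneg (by linarith) hxy.le)
      (div_nonneg (by linarith) hxy.le) le_rfl ?_ ?_ ?_
    · field_simp; ring
    · field_simp; ring
    · field_simp; linarith
  rcases eq_or_lt_of_le h1 with hb | hb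
  · refine ⟨y, B, hb.symm, by ring, deg ?_ _ _⟩
    apply le_antisymm h5
    rw [← hb]
    nlinarith
  rcases eq_or_lt_of_le h2 with ha | ha
  · refine ⟨x, A, by ring, ha.symm, deg ?_ _ _⟩
    apply le_antisymm h5
    rw [← ha]
    nlinarith
  have hs : 0 < s₂ - s₁ := by
    by_contra hcon
    nlinarith
  obtain ⟨a, ha'⟩ : ∃ a, a = A - B + s₂ * (y - x) := ⟨_, rfl⟩
  obtain ⟨b, hb'⟩ : ∃ b, b = B - A - s₁ * (y - x) := ⟨_, rfl⟩
  have ha0 : 0 < a := by rw [ha']; linarith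
  have hb0 : 0 < b := by rw [hb']; linarith
  obtain ⟨c, hc⟩ : ∃ c, c * (s₂ - s₁) = A - B - s₁ * x + s₂ * y :=
    ⟨(A - B - s₁ * x + s₂ * y) / (s₂ - s₁), by field_simp⟩
  obtain ⟨α, hα⟩ : ∃ α, α * a = C - B - s₂ * (z - y) :=
    ⟨(C - B - s₂ * (z - y)) / a, by field_simp⟩
  obtain ⟨β, hβ⟩ : ∃ β, β * b = C - A - s₁ * (z - x) :=
    ⟨(C - A - s₁ * (z - x)) / b, by field_simp⟩
  have hα0 : 0 ≤ α := by
    by_contra hcon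
    nlinarith
  have hβ0 : 0 ≤ β := by
    by_contra hcon
    nlinarith
  have hab0 : 0 < a * b := mul_pos ha0 hb0
  have hid : (1 - α - β) * (a * b) = (s₂ - s₁) * (A * (y - z) + B * (z - x) - C * (y - x)) := by
    have : (1 - α - β) * (a * b) = a * b - b * (α * a) - a * (β * b) := by ring
    rw [this, hα, hβ, ha', hb']; ring
  have hγ : 0 ≤ 1 - α - β := by
    have : 0 ≤ (1 - α - β) * (a * b) := by
      rw [hid]; exact mul_nonneg hs.le (by linarith)
    exact nonneg_of_mul_nonneg_left this hab0
  have hX : α * x + β * y + (1 - α - β) * c = z := by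
    -- weights reproduce the abscissa
    have e1 : (α * x + β * y + (1 - α - β) * c - z) * (s₂ - s₁) = 0 := by
      have k1 : (x - c) * (s₂ - s₁) = - a := by rw [ha']; linear_combination -hc
      have k2 : (y - c) * (s₂ - s₁) = b := by rw [hb']; linear_combination -hc
      linear_combination α * k1 + β * k2 + hc - hα + hβ
    rcases mul_eq_zero.mp e1 with h | h
    · linarith
    · linarith
  refine ⟨c, A + s₁ * (c - x), rfl, by linear_combination -hc, comb _ _ α β (1 - α - β) hα0 hβ0 hγ
    (by ring) hX ?_⟩
  linear_combination s₁ * hX + hβ - β * hb'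

/-- Let `Z` be a simple, τ-upper semicontinuous, translation and dually
epi-translation invariant valuation on `LC(ℝ)` vanishing on indicators of closed intervals, and
let `u ∈ LC(ℝ)` with `dom u = [-m,m]`. If `x₀` is an interior point of `dom u` at which `u` is
twice differentiable with `u''(x₀) = 0` (second-order Taylor expansion), then for all
`ρ, δ > 0` there are a support triangle `T = T(x,y)` of `u`, a convex body `S_T ⊆ T` which is a
support triangle of some `v_T ∈ PLQ(ℝ)`, with `(x₀, u x₀) ∈ T`, `0 < y - x < δ` and
`Z(u + I_{[x,y]}) ≤ Z(v_T) + (ρ/2)(y - x)`. -/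
theorem stmt15 (Z : (ℝ → EReal) → ℝ)
    (hval : IsVal Z) (husc : TauUSC Z) (htrans : TransInv Z) (hdual : DualTransInv Z)
    (hsimple : ∀ u : ℝ → EReal, IsLC u → (∃ x : ℝ, edom u = {x}) → Z u = 0)
    (hvanish : ∀ a b : ℝ, a ≤ b → Z (eIndicator (Set.Icc a b)) = 0)
    (m : ℝ) (hm : 0 < m) (u : ℝ → EReal) (hu : IsLC u) (hdom : edom u = Set.Icc (-m) m)
    (x₀ : ℝ) (hx₀ : x₀ ∈ interior (edom u)) (d₁ : ℝ)
    (hTaylor : (fun h : ℝ =>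
        (u (x₀ + h)).toReal - (u x₀).toReal - d₁ * h)
      =o[𝓝 0] fun h : ℝ => h ^ 2)
    (ρ δ : ℝ) (hρ : 0 < ρ) (hδ : 0 < δ) :
    ∃ (x y : ℝ) (T S : Set (ℝ × ℝ)) (v : ℝ → EReal),
      IsSupportTriangle u x y T ∧
      (x₀, (u x₀).toReal) ∈ T ∧ 0 < y - x ∧ y - x < δ ∧
      S ⊆ T ∧ (∃ x' y' : ℝ, IsSupportTriangle v x' y' S) ∧ IsPLQ v ∧
      Z (fun t => u t + eIndicator (Set.Icc x y) t) ≤ Z v + ρ / 2 * (y - x) := by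
  have hZ : ZHyp Z := ⟨hval, husc, htrans, hdual, hsimple, hvanish⟩
  have hcoe : ∀ t ∈ Set.Icc (-m) m, u t = (((u t).toReal : ℝ) : EReal) := by
    intro t ht
    rw [← hdom] at ht
    exact (EReal.coe_toReal (ne_of_lt ht) (hu.2.2.1 t)).symm
  have hconv : ConvexOn ℝ (Set.Icc (-m) m) (fun t => (u t).toReal) := by
    refine convexOn_iff_forall_pos.mpr ⟨convex_Icc _ _, fun x hx y hy a b ha hb hab => ?_⟩
    have hz := (convex_Icc (-m) m) hx hy ha.le hb.le hab
    obtain rfl : b = 1 - a := by linarith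
    have := hu.1 x y a ha (by linarith)
    rw [hcoe x hx, hcoe y hy, hcoe _ hz] at this
    simp only [smul_eq_mul] at this ⊢
    exact_mod_cast this
  rw [hdom, interior_Icc] at hx₀
  obtain ⟨hx1, hx2⟩ := hx₀
  have hr₀ : 0 < min (x₀ + m) (m - x₀) := lt_min (by linarith) (by linarith)
  set r₀ := min (x₀ + m) (m - x₀) with hr₀def
  have hr1 : r₀ ≤ x₀ + m := min_le_left _ _
  have hr2 : r₀ ≤ m - x₀ := min_le_right _ _
  set g : ℝ → ℝ := fun h => (u (x₀ + h)).toReal - (u x₀).toReal - d₁ * h with hg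
  have hgconv : ConvexOn ℝ (Set.Icc (-r₀) r₀) g := by
    refine ⟨convex_Icc _ _, fun x hx y hy a b ha hb hab => ?_⟩
    have h1 : x₀ + x ∈ Set.Icc (-m) m := ⟨by linarith [hx.1], by linarith [hx.2]⟩
    have h2 : x₀ + y ∈ Set.Icc (-m) m := ⟨by linarith [hy.1], by linarith [hy.2]⟩
    have := hconv.2 h1 h2 ha hb hab
    have e : a • (x₀ + x) + b • (x₀ + y) = x₀ + (a • x + b • y) := by
      simp only [smul_eq_mul]; linear_combination x₀ * hab
    simp only [e] at this
    simp only [hg, smul_eq_mul] at this ⊢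
    have e2 : (u x₀).toReal = a * (u x₀).toReal + b * (u x₀).toReal := by
      rw [← add_mul, hab, one_mul]
    linarith
  obtain ⟨h, hh, hhδ, hhr, ⟨K, hK⟩, hZle⟩ := hZ.main hr₀ hρ (by linarith : 0 < δ / 2) hgconv hTaylor
  have hxm : x₀ - h ∈ Set.Ioo (-m) m := ⟨by linarith, by linarith⟩
  have hym : x₀ + h ∈ Set.Ioo (-m) m := ⟨by linarith, by linarith⟩
  obtain ⟨s₁, hs₁⟩ := exists_subgrad hconv hxm
  obtain ⟨s₂, hs₂⟩ := exists_subgrad hconv hym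
  have hp : x₀ ∈ Set.Icc (-m) m := ⟨hx1.le, hx2.le⟩
  obtain ⟨c₁, c₂, hc1, hc2, hmem⟩ := triangle_aux (x := x₀ - h) (y := x₀ + h)
    (z := x₀) (A := (u (x₀ - h)).toReal) (B := (u (x₀ + h)).toReal) (C := (u x₀).toReal)
    (by linarith) (by linarith) (hs₁ _ (Set.Ioo_subset_Icc_self hym))
    (hs₂ _ (Set.Ioo_subset_Icc_self hxm)) (hs₁ _ hp) (hs₂ _ hp) (by
      have := hconv.2 (Set.Ioo_subset_Icc_self hxm) (Set.Ioo_subset_Icc_self hym)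
        (by norm_num : (0:ℝ) ≤ 1 / 2) (by norm_num : (0:ℝ) ≤ 1 / 2) (by norm_num)
      have e : (1 / 2 : ℝ) • (x₀ - h) + (1 / 2 : ℝ) • (x₀ + h) = x₀ := by
        simp only [smul_eq_mul]; ring
      simp only [e] at this
      simp only [smul_eq_mul] at this
      nlinarith)
  set A := (u (x₀ - h)).toReal with hA
  set B := (u (x₀ + h)).toReal with hB
  set σ := (B - A) / (2 * h) with hσ
  have hσh : σ * (2 * h) = B - A := by rw [hσ]; field_simp
  set L : ℝ → ℝ := fun t => σ * t + (A - σ * (x₀ - h)) with hL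
  have hLx : L (x₀ - h) = A := by simp only [hL]; ring
  have hLy : L (x₀ + h) = B := by simp only [hL]; linarith
  have hmx : x₀ - h ∈ Set.Icc (x₀ - h) (x₀ + h) := ⟨le_rfl, by linarith⟩
  have hmy : x₀ + h ∈ Set.Icc (x₀ - h) (x₀ + h) := ⟨by linarith, le_rfl⟩
  have hle : x₀ - h ≤ x₀ + h := by linarith
  refine ⟨x₀ - h, x₀ + h, convexHull ℝ {((x₀ - h, A) : ℝ × ℝ), (x₀ + h, B), (c₁, c₂)},
    convexHull ℝ {((x₀ - h, A) : ℝ × ℝ), (x₀ + h, B), (x₀ - h, A)},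
    resF L (x₀ - h) (x₀ + h), ?_, hmem, by linarith, by linarith, ?_, ?_, ?_, ?_⟩
  · refine ⟨by linarith, by rw [hdom]; exact Set.Ioo_subset_Icc_self hxm,
      by rw [hdom]; exact Set.Ioo_subset_Icc_self hym, s₁, s₂, c₁, c₂, ?_, ?_, hc1, hc2, rfl⟩
    · intro t ht; rw [hdom] at ht; exact hs₁ t ht
    · intro t ht; rw [hdom] at ht; exact hs₂ t ht
  · apply convexHull_mono
    intro z hz
    simp only [Set.mem_insert_iff, Set.mem_singleton_iff] at hz ⊢
    tauto
  · refine ⟨x₀ - h, x₀ + h, by linarith, by rw [edom_resF]; exact hmx,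
      by rw [edom_resF]; exact hmy, σ, σ, x₀ - h, A, ?_, ?_, ?_, ?_, ?_⟩
    · intro t ht
      rw [edom_resF] at ht
      rw [resF_mem hmx, resF_mem ht, EReal.toReal_coe, EReal.toReal_coe]
      apply le_of_eq; simp only [hL]; ring
    · intro t ht
      rw [edom_resF] at ht
      rw [resF_mem hmy, resF_mem ht, EReal.toReal_coe, EReal.toReal_coe]
      apply le_of_eq; simp only [hL]; ring
    · rw [resF_mem hmx, EReal.toReal_coe, hLx]; ring
    · rw [resF_mem hmy, EReal.toReal_coe, hLy]; linarith
    · rw [resF_mem hmx, resF_mem hmy, EReal.toReal_coe, EReal.toReal_coe, hLx, hLy]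
  · refine ⟨isLC_resF (goodF_affine _ _) hle, 0, fun _ => x₀ - h, fun _ => x₀ + h,
      fun _ => hle, ?_, fun _ => ⟨0, σ, A - σ * (x₀ - h), fun t ht => ?_⟩⟩
    · rw [edom_resF]; exact (Set.iUnion_const _).symm
    · rw [resF_mem ht, EReal.toReal_coe]; simp only [hL]; ring
  · have e0 : Z (resF L (x₀ - h) (x₀ + h)) = 0 := hZ.affine hle (fun t _ => rfl)
    have e1 : (fun t => u t + eIndicator (Set.Icc (x₀ - h) (x₀ + h)) t) =
        resF (fun t => (u t).toReal) (x₀ - h) (x₀ + h) := by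
      funext t
      by_cases ht : t ∈ Set.Icc (x₀ - h) (x₀ + h)
      · have : t ∈ Set.Icc (-m) m := ⟨by linarith [ht.1, hxm.1], by linarith [ht.2, hym.2]⟩
        unfold resF
        rw [← hcoe t this]
      · rw [resF_notMem ht]
        unfold eIndicator
        rw [if_neg ht, EReal.add_top_of_ne_bot (hu.2.2.1 t)]
    have e2 : Z (resF (fun t => (u t).toReal) (x₀ - h) (x₀ + h)) = Z (resF g (-h) h) := by
      rw [resF_congr (f := g) (g := extF g K (-h) h) (fun t ht => (extF_eq ht).symm),
        ← hZ.shift hK (by linarith : -h ≤ h) x₀ (a' := x₀ - h) (b' := x₀ + h) (by ring) (by ring)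
          (fun t _ => rfl)]
      apply hZ.affine_add (hK.shift x₀) hle (p := d₁) (q := (u x₀).toReal - d₁ * x₀)
      intro t ht
      have : t - x₀ ∈ Set.Icc (-h) h := ⟨by linarith [ht.1], by linarith [ht.2]⟩
      rw [extF_eq this]
      simp only [hg, add_sub_cancel]; ring
    rw [e0, e1, e2]
    linarith


end
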